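/- arXiv:2407.04371 — 13 statements merged into one kernel-verified Lean document; each statement's English description precedes it below -/
import Mathlib

section
/- Let N ≥ 1 and let U ∈ M_{2N}(ℂ) be unitary. Then there exists a real weight matrix w ∈ ℝ^{N×N} such that for every real vector x ∈ ℝ^N (regarded as an element of ℂ^N), the QNN output satisfies f_U(x) = ∑_{i,j} w_{ij} x_i x_j. -/
open Matrix

/-- For every unitary `U ∈ M_{2N}(ℂ)` there is a real weight matrix
`w ∈ ℝ^{N×N}` such that for every real vector `x ∈ ℝ^N` (viewed in `ℂ^N`), the QNN
output `f_U(x) = v† U† Z U v` (with `v = (x,0)`, `Z = diag(I,-I)`) equals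
`∑_{i,j} w_{ij} x_i x_j`. -/
theorem stmt1 (N : ℕ) (hN : 1 ≤ N)
    (U : Matrix (Fin N ⊕ Fin N) (Fin N ⊕ Fin N) ℂ)
    (hU : U ∈ Matrix.unitaryGroup (Fin N ⊕ Fin N) ℂ) :
    ∃ w : Fin N → Fin N → ℝ,
      ∀ x : Fin N → ℝ,
        star (Sum.elim (fun i => (x i : ℂ)) 0) ⬝ᵥ
          ((Uᴴ * Matrix.fromBlocks 1 0 0 (-1) * U) *ᵥ Sum.elim (fun i => (x i : ℂ)) 0)
        = ((∑ i, ∑ j, w i j * x i * x j : ℝ) : ℂ) := by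
  have hM : (Uᴴ * Matrix.fromBlocks 1 0 0 (-1) * U).IsHermitian := by
    apply Matrix.isHermitian_conjTranspose_mul_mul
    simp [Matrix.IsHermitian, Matrix.fromBlocks_conjTranspose]
  generalize (Uᴴ * Matrix.fromBlocks 1 0 0 (-1) * U) = M at hM
  refine ⟨fun i j => (M (Sum.inl i) (Sum.inl j)).re, fun x => ?_⟩
  apply Complex.ext
  · simp only [dotProduct, Matrix.mulVec, Fintype.sum_sum_type, Finset.mul_sum]
    simp [Finset.mul_sum]
    refine Finset.sum_congr rfl fun i _ => Finset.sum_congr rfl fun j _ => ?_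
    ring
  · rw [Complex.ofReal_im]
    exact hM.im_star_dotProduct_mulVec_self _
end

section
/- Let N ≥ 1 and let U ∈ M_{2N}(ℂ) be unitary. Then there exists a real weight matrix w ∈ ℝ^{N×N} such that for every x ∈ ℂ^N, the QNN output satisfies f_U(x) = ∑_{i,j} w_{ij} (x⊛x)_{ij}. That is, every function expressible by a QNN is expressible by a tensor product perceptron acting on x⊛x. -/
open Matrix

/-- The complex tensor product `x ⊛ x ∈ ℝ^{N×N}`:
`(x⊛x)_{ii} = |x_i|²` and, for `i ≠ j`, `(x⊛x)_{ij} = Re(x_i conj(x_j)) + Im(x_i conj(x_j))`. -/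
def cprod {N : ℕ} (x : Fin N → ℂ) : Fin N → Fin N → ℝ := fun i j =>
  if i = j then Complex.normSq (x i)
  else (x i * star (x j)).re + (x i * star (x j)).im

lemma cprod_eq_aux {N : ℕ} (x : Fin N → ℂ) (i j : Fin N) :
    cprod x i j = (x i * star (x j)).re + (x i * star (x j)).im := by
  unfold cprod
  split_ifs with h
  · subst h
    simp [Complex.normSq_apply]
    ring
  · rfl

lemma sum_symm_aux {N : ℕ} (f g : Fin N → Fin N → ℂ)
    (h : ∀ i j, f i j + f j i = g i j + g j i) :
    ∑ i, ∑ j, f i j = ∑ i, ∑ j, g i j := by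
  have key : ∀ k : Fin N → Fin N → ℂ,
      ∑ i, ∑ j, (k i j + k j i) = 2 * ∑ i, ∑ j, k i j := by
    intro k
    simp only [Finset.sum_add_distrib]
    rw [Finset.sum_comm (f := fun i j => k j i)]
    ring
  have h2 : (2 : ℂ) * ∑ i, ∑ j, f i j = 2 * ∑ i, ∑ j, g i j := by
    rw [← key f, ← key g]
    simp only [h]
  exact mul_left_cancel₀ two_ne_zero h2

/-- For every unitary `U ∈ M_{2N}(ℂ)` there is a real weight matrix
`w ∈ ℝ^{N×N}` such that the QNN output `f_U(x) = v† U† Z U v` equals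
`∑_{i,j} w_{ij} (x⊛x)_{ij}` for every `x ∈ ℂ^N`: every QNN function is expressible
by a tensor product perceptron acting on `x ⊛ x`. -/
theorem stmt2 (N : ℕ) (hN : 1 ≤ N)
    (U : Matrix (Fin N ⊕ Fin N) (Fin N ⊕ Fin N) ℂ)
    (hU : U ∈ Matrix.unitaryGroup (Fin N ⊕ Fin N) ℂ) :
    ∃ w : Fin N → Fin N → ℝ,
      ∀ x : Fin N → ℂ,
        star (Sum.elim x 0) ⬝ᵥ
          ((Uᴴ * Matrix.fromBlocks 1 0 0 (-1) * U) *ᵥ Sum.elim x 0)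
        = ((∑ i, ∑ j, w i j * cprod x i j : ℝ) : ℂ) := by
  have hH : (Uᴴ * Matrix.fromBlocks 1 0 0 (-1) * U).IsHermitian := by
    apply Matrix.isHermitian_conjTranspose_mul_mul
    simp [Matrix.IsHermitian, Matrix.fromBlocks_conjTranspose]
  generalize Uᴴ * Matrix.fromBlocks 1 0 0 (-1) * U = H at hH
  refine ⟨fun i j => (H (Sum.inl i) (Sum.inl j)).re + (H (Sum.inl i) (Sum.inl j)).im, ?_⟩
  intro x
  have e : star (Sum.elim x 0) ⬝ᵥ (H *ᵥ Sum.elim x 0)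
      = ∑ i, ∑ j, star (x i) * (H (Sum.inl i) (Sum.inl j) * x j) := by
    simp [dotProduct, Matrix.mulVec, Fintype.sum_sum_type, Finset.mul_sum]
  rw [e]
  push_cast
  apply sum_symm_aux
  intro i j
  have h1 := hH.apply (Sum.inl i) (Sum.inl j)
  rw [← h1, cprod_eq_aux, cprod_eq_aux]
  apply Complex.ext <;> simp <;> ring
end

section
/- Let N ≥ 1 and let w ∈ ℝ^{N×N} be arbitrary real weights. Then there exist a unitary matrix U ∈ M_{2N}(ℂ) and a real constant c > 0 such that for every x ∈ ℂ^N, ∑_{i,j} w_{ij} (x⊛x)_{ij} = c · f_U(x). In particular, for classification (where only the sign of the output matters), a QNN can express any function a tensor product perceptron can. -/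
open Matrix

lemma aux_diag (N : ℕ) (H : Matrix (Fin N) (Fin N) ℂ) (hH : H.IsHermitian) :
    ∃ V : Matrix (Fin N) (Fin N) ℂ, ∃ d : Fin N → ℝ, Vᴴ * V = 1 ∧
      H = V * diagonal (fun i => (d i : ℂ)) * Vᴴ := by
  refine ⟨hH.eigenvectorUnitary, hH.eigenvalues, ?_, ?_⟩
  · exact Unitary.coe_star_mul_self hH.eigenvectorUnitary
  · have := hH.spectral_theorem
    rw [Unitary.conjStarAlgAut_apply] at this
    exact this

lemma aux_form (N : ℕ) (w : Fin N → Fin N → ℝ) :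
    ∃ H : Matrix (Fin N) (Fin N) ℂ, H.IsHermitian ∧ ∀ x : Fin N → ℂ,
      ((∑ i, ∑ j, w i j * cprod x i j : ℝ) : ℂ) = star x ⬝ᵥ (H *ᵥ x) := by
  let a : Matrix (Fin N) (Fin N) ℂ := fun j i =>
    if i = j then (w i j : ℂ) else (w i j : ℂ) * (1 - Complex.I)
  refine ⟨(1/2 : ℂ) • (a + aᴴ), ?_, ?_⟩
  · unfold Matrix.IsHermitian
    rw [conjTranspose_smul, conjTranspose_add, conjTranspose_conjTranspose, add_comm]
    simp
  · intro x
    have key : ∀ i j, ((w i j * cprod x i j : ℝ) : ℂ) =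
        (1/2 : ℂ) * (star (x j) * (a j i * x i) + star (x i) * (star (a j i) * x j)) := by
      intro i j
      simp only [a, cprod]
      split_ifs with h
      · subst h
        apply Complex.ext <;> simp [Complex.normSq_apply] <;> ring
      · apply Complex.ext <;> simp <;> ring
    push_cast at key ⊢
    simp_rw [key]
    rw [smul_mulVec, add_mulVec, dotProduct_smul, dotProduct_add]
    simp only [dotProduct, mulVec, ← Finset.mul_sum, Finset.sum_add_distrib, Pi.star_apply,
      conjTranspose_apply, smul_eq_mul]
    congr 2
    · rw [Finset.sum_comm]
      simp only [Finset.mul_sum]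

/-- For any real weights `w ∈ ℝ^{N×N}` there exist a unitary
`U ∈ M_{2N}(ℂ)` and a constant `c > 0` such that for every `x ∈ ℂ^N`,
`∑_{i,j} w_{ij} (x⊛x)_{ij} = c · f_U(x)`, where `f_U(x) = v† U† Z U v`
with `v = (x,0)` and `Z = diag(I,-I)`. -/
theorem stmt3 (N : ℕ) (hN : 1 ≤ N) (w : Fin N → Fin N → ℝ) :
    ∃ U : Matrix (Fin N ⊕ Fin N) (Fin N ⊕ Fin N) ℂ,
      U ∈ Matrix.unitaryGroup (Fin N ⊕ Fin N) ℂ ∧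
      ∃ c : ℝ, 0 < c ∧
        ∀ x : Fin N → ℂ,
          ((∑ i, ∑ j, w i j * cprod x i j : ℝ) : ℂ)
            = (c : ℂ) *
              (star (Sum.elim x 0) ⬝ᵥ
                ((Uᴴ * Matrix.fromBlocks 1 0 0 (-1) * U) *ᵥ Sum.elim x 0)) := by
  obtain ⟨H, hH, hf⟩ := aux_form N w
  obtain ⟨V, d, hV, hd⟩ := aux_diag N H hH
  let c : ℝ := 1 + ∑ i, |d i|
  have hc : 0 < c := by positivity
  have hle : ∀ i, |d i / c| ≤ 1 := by
    intro i
    rw [abs_div, abs_of_pos hc, div_le_one hc]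
    have := Finset.single_le_sum (f := fun i => |d i|) (fun i _ => abs_nonneg _)
      (Finset.mem_univ i)
    simp only [c]
    linarith
  let C : Matrix (Fin N) (Fin N) ℂ := diagonal fun i => ((√((1 + d i / c) / 2) : ℝ) : ℂ)
  let S : Matrix (Fin N) (Fin N) ℂ := diagonal fun i => ((√((1 - d i / c) / 2) : ℝ) : ℂ)
  have hCh : Cᴴ = C := by
    simp only [C, diagonal_conjTranspose]; congr 1; ext i; simp
  have hSh : Sᴴ = S := by
    simp only [S, diagonal_conjTranspose]; congr 1; ext i; simp
  have hCC : C * C = diagonal fun i => (((1 + d i / c) / 2 : ℝ) : ℂ) := by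
    simp only [C, diagonal_mul_diagonal]
    congr 1; ext i
    rw [← Complex.ofReal_mul, Real.mul_self_sqrt]
    have := abs_le.1 (hle i)
    linarith
  have hSS : S * S = diagonal fun i => (((1 - d i / c) / 2 : ℝ) : ℂ) := by
    simp only [S, diagonal_mul_diagonal]
    congr 1; ext i
    rw [← Complex.ofReal_mul, Real.mul_self_sqrt]
    have := abs_le.1 (hle i)
    linarith
  have hCS : C * S = S * C := by
    simp only [S, C, diagonal_mul_diagonal]
    congr 1; ext i; ring
  have hsum : C * C + S * S = 1 := by
    rw [hCC, hSS, diagonal_add, ← diagonal_one]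
    congr 1; ext i; push_cast; ring
  have hdiff : (c : ℂ) • (C * C - S * S) = diagonal fun i => (d i : ℂ) := by
    have hc' : (c : ℂ) ≠ 0 := by exact_mod_cast hc.ne'
    rw [hCC, hSS, diagonal_sub, ← diagonal_smul]
    congr 1; ext i; simp only [Pi.smul_apply, smul_eq_mul]; push_cast; field_simp; ring
  have hV1 : ∀ M : Matrix (Fin N) (Fin N) ℂ, Vᴴ * (V * M) = M := by
    intro M; rw [← Matrix.mul_assoc, hV, Matrix.one_mul]
  refine ⟨fromBlocks (C * Vᴴ) (-S) (S * Vᴴ) C, ?_, c, hc, ?_⟩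
  · rw [mem_unitaryGroup_iff, star_eq_conjTranspose, fromBlocks_conjTranspose, fromBlocks_multiply,
      ← fromBlocks_one]
    simp only [conjTranspose_mul, conjTranspose_neg, conjTranspose_conjTranspose, hCh, hSh,
      Matrix.mul_assoc, hV1, neg_mul, mul_neg, neg_neg, hCS, hsum]
    rw [add_comm (S * S), hsum]
    simp
  · intro x
    rw [hf x, fromBlocks_conjTranspose, fromBlocks_multiply, fromBlocks_multiply,
      fromBlocks_mulVec]
    have hs : star (Sum.elim x (0 : Fin N → ℂ)) = Sum.elim (star x) 0 := by
      ext i; cases i <;> simp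
    rw [hs, sumElim_dotProduct_sumElim, hd, ← hdiff]
    simp only [conjTranspose_mul, conjTranspose_conjTranspose, hCh, hSh, Sum.elim_comp_inl,
      Sum.elim_comp_inr, zero_dotProduct, mulVec_zero, add_zero, zero_add, mul_zero, mul_one,
      mul_neg, neg_mul]
    rw [Matrix.mul_smul, Matrix.smul_mul, smul_mulVec, dotProduct_smul, smul_eq_mul]
    congr 4
    noncomm_ring
end

section
/- For every N ≥ 1 and all x, y ∈ ℂ^N, ∑_{i,j} (x⊛x)_{ij} (y⊛y)_{ij} = |∑_i x_i conj(y_i)|². That is, the kernel of the tensor product perceptron equals the QNN kernel K(x, y) = |⟨x, y⟩|². -/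
open Matrix

/-- For all `x, y ∈ ℂ^N`,
`∑_{i,j} (x⊛x)_{ij} (y⊛y)_{ij} = |∑_i x_i conj(y_i)|²`:
the kernel of the tensor product perceptron equals the QNN kernel `K(x,y) = |⟨x,y⟩|²`. -/
theorem stmt5 (N : ℕ) (hN : 1 ≤ N) (x y : Fin N → ℂ) :
    (∑ i, ∑ j, cprod x i j * cprod y i j)
      = Complex.normSq (∑ i, x i * star (y i)) := by
  have hc : ∀ (z : Fin N → ℂ) (i j : Fin N), cprod z i j =
      (z i).re * (z j).re + (z i).im * (z j).im
        + ((z i).im * (z j).re - (z i).re * (z j).im) := by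
    intro z i j
    unfold cprod
    split_ifs with h
    · subst h
      rw [Complex.normSq_apply]
      ring
    · simp
      ring
  have hn : Complex.normSq (∑ i, x i * star (y i)) =
      ∑ i, ∑ j, ((x i * star (y i)).re * (x j * star (y j)).re
        + (x i * star (y i)).im * (x j * star (y j)).im) := by
    rw [Complex.normSq_apply, Complex.re_sum, Complex.im_sum,
      Finset.sum_mul_sum, Finset.sum_mul_sum]
    simp only [Finset.sum_add_distrib]
  have h2 : (∑ i, ∑ j, cprod x i j * cprod y i j)
      = ∑ i, ∑ j, cprod x j i * cprod y j i := Finset.sum_comm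
  have h3 : (∑ i, ∑ j, cprod x i j * cprod y i j)
      + (∑ i, ∑ j, cprod x j i * cprod y j i)
      = 2 * Complex.normSq (∑ i, x i * star (y i)) := by
    rw [hn, Finset.mul_sum, ← Finset.sum_add_distrib]
    refine Finset.sum_congr rfl fun i _ => ?_
    rw [Finset.mul_sum, ← Finset.sum_add_distrib]
    refine Finset.sum_congr rfl fun j _ => ?_
    simp only [hc]
    simp
    ring
  linarith
end

section
/- Let n ≥ 3. There exist no w ∈ ℝ^{n×n} and z ∈ ℝ such that for every nonzero x ∈ {0,1}^n, writing x̂ = x / ‖x‖₂, one has ∑_{i,j} w_{ij} x̂_i x̂_j − z ≥ 0 whenever parity(x) = 1 and ∑_{i,j} w_{ij} x̂_i x̂_j − z < 0 whenever parity(x) = 0. That is, a tensor product perceptron (even with bias) cannot express the parity function on the normalised Boolean hypercube {0,1}^n for n ≥ 3. -/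
theorem aux_sum (n : ℕ) (w : Fin n → Fin n → ℝ) (S : Finset (Fin n)) :
    (∑ i, ∑ j, w i j * ((if decide (i ∈ S) = true then (1:ℝ) else 0) /
        Real.sqrt (∑ j, (if decide (j ∈ S) = true then (1:ℝ) else 0) ^ 2)) *
      ((if decide (j ∈ S) = true then (1:ℝ) else 0) /
        Real.sqrt (∑ j, (if decide (j ∈ S) = true then (1:ℝ) else 0) ^ 2)))
      = (∑ i ∈ S, ∑ j ∈ S, w i j) / (S.card : ℝ) := by
  have h1 : (∑ j, (if decide (j ∈ S) = true then (1:ℝ) else 0) ^ 2) = (S.card : ℝ) := by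
    simp
  rw [h1]
  have h2 : Real.sqrt (S.card : ℝ) * Real.sqrt (S.card : ℝ) = S.card :=
    Real.mul_self_sqrt (Nat.cast_nonneg _)
  have h3 : ∀ i j, w i j * ((if decide (i ∈ S) = true then (1:ℝ) else 0) / Real.sqrt S.card) *
      ((if decide (j ∈ S) = true then (1:ℝ) else 0) / Real.sqrt S.card)
      = (if i ∈ S then (if j ∈ S then w i j else 0) else 0) / (S.card : ℝ) := by
    intro i j
    by_cases hi : i ∈ S <;> by_cases hj : j ∈ S <;> simp [hi, hj]
    rw [mul_assoc, ← mul_inv, h2, div_eq_mul_inv]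
  simp_rw [h3, ← Finset.sum_div]
  congr 1
  rw [← Finset.sum_filter_add_sum_filter_not Finset.univ (fun i => i ∈ S)]
  rw [Finset.sum_congr rfl (g := fun i => ∑ j ∈ S, w i j), 
    Finset.sum_eq_zero (s := Finset.univ.filter (fun i => ¬ i ∈ S))]
  · simp
  · intro i hi
    simp at hi
    simp [hi]
  · intro i hi
    simp at hi
    simp [hi]

/-- For `n ≥ 3`, no tensor product perceptron (even with a bias `z`) expresses
the parity function on the normalised Boolean hypercube `{0,1}^n ∖ {0}`: there are no
`w ∈ ℝ^{n×n}` and `z ∈ ℝ` such that for every nonzero `x ∈ {0,1}^n`, with `x̂ = x/‖x‖₂`,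
`∑_{i,j} w_{ij} x̂_i x̂_j − z ≥ 0` when `parity(x) = 1` and `< 0` when `parity(x) = 0`. -/
theorem stmt7 (n : ℕ) (hn : 3 ≤ n) :
    ¬ ∃ (w : Fin n → Fin n → ℝ) (z : ℝ),
      ∀ x : Fin n → Bool, x ≠ (fun _ => false) →
        let xr : Fin n → ℝ := fun i => if x i then 1 else 0
        let xhat : Fin n → ℝ := fun i => xr i / Real.sqrt (∑ j, xr j ^ 2)
        (Odd (Finset.univ.filter (fun i => x i = true)).card →
          0 ≤ (∑ i, ∑ j, w i j * xhat i * xhat j) - z) ∧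
        (¬ Odd (Finset.univ.filter (fun i => x i = true)).card →
          (∑ i, ∑ j, w i j * xhat i * xhat j) - z < 0) := by
  rintro ⟨w, z, H⟩
  have key : ∀ S : Finset (Fin n), S.Nonempty →
      (Odd S.card → 0 ≤ (∑ i ∈ S, ∑ j ∈ S, w i j) / (S.card : ℝ) - z) ∧
      (¬ Odd S.card → (∑ i ∈ S, ∑ j ∈ S, w i j) / (S.card : ℝ) - z < 0) := by
    intro S hS
    obtain ⟨a, ha⟩ := hS
    have h := H (fun i => decide (i ∈ S)) (by
      intro h
      have := congrFun h a
      simp [ha] at this)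
    have hc : (Finset.univ.filter (fun i => decide (i ∈ S) = true)) = S := by
      ext i; simp
    dsimp only at h
    rw [aux_sum n w S, hc] at h
    exact h
  have c1 : ∀ a, 0 ≤ w a a - z := by
    intro a
    have := (key {a} (by simp)).1 (by simp)
    simpa using this
  have c2 : ∀ a b, a ≠ b → (w a a + w a b + (w b a + w b b)) / 2 - z < 0 := by
    intro a b hab
    have hc : ({a, b} : Finset (Fin n)).card = 2 := Finset.card_pair hab
    have := (key {a, b} (by simp)).2 (by rw [hc]; decide)
    rw [hc] at this
    simpa [Finset.sum_pair hab] using this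
  obtain ⟨a, b, c, hab, hac, hbc⟩ : ∃ a b c : Fin n, a ≠ b ∧ a ≠ c ∧ b ≠ c :=
    ⟨⟨0, by omega⟩, ⟨1, by omega⟩, ⟨2, by omega⟩, by simp, by simp, by simp⟩
  have hc : ({a, b, c} : Finset (Fin n)).card = 3 := Finset.card_eq_three.2
    ⟨a, b, c, hab, hac, hbc, rfl⟩
  have c3 := (key {a, b, c} (by simp)).1 (by rw [hc]; decide)
  rw [hc] at c3
  have ha : a ∉ ({b, c} : Finset (Fin n)) := by simp [hab, hac]
  simp only [Finset.sum_insert ha, Finset.sum_pair hbc] at c3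
  push_cast at c3
  linarith [c1 a, c1 b, c1 c, c2 a b hab, c2 a c hac, c2 b c hbc]
end

section
/- Let n ≥ 3. There exist no w ∈ ℝ^{n×n} and z ∈ ℝ such that for every x ∈ {0,1}^n (including the origin), one has ∑_{i,j} w_{ij} x_i x_j − z ≥ 0 whenever parity(x) = 1 and ∑_{i,j} w_{ij} x_i x_j − z < 0 whenever parity(x) = 0. That is, a tensor product perceptron (even with bias) cannot express the parity function on the unnormalised Boolean hypercube {0,1}^n for n ≥ 3. -/
/-- For `n ≥ 3`, no tensor product perceptron (even with a bias `z`) expresses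
the parity function on the unnormalised Boolean hypercube `{0,1}^n` (including the origin):
there are no `w ∈ ℝ^{n×n}` and `z ∈ ℝ` such that for every `x ∈ {0,1}^n`,
`∑_{i,j} w_{ij} x_i x_j − z ≥ 0` when `parity(x) = 1` and `< 0` when `parity(x) = 0`. -/
theorem stmt8 (n : ℕ) (hn : 3 ≤ n) :
    ¬ ∃ (w : Fin n → Fin n → ℝ) (z : ℝ),
      ∀ x : Fin n → Bool,
        let xr : Fin n → ℝ := fun i => if x i then 1 else 0
        (Odd (Finset.univ.filter (fun i => x i = true)).card →
          0 ≤ (∑ i, ∑ j, w i j * xr i * xr j) - z) ∧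
        (¬ Odd (Finset.univ.filter (fun i => x i = true)).card →
          (∑ i, ∑ j, w i j * xr i * xr j) - z < 0) := by
  rintro ⟨w, z, h⟩
  have key : ∀ S : Finset (Fin n),
      (Odd S.card → 0 ≤ (∑ i ∈ S, ∑ j ∈ S, w i j) - z) ∧
      (¬ Odd S.card → (∑ i ∈ S, ∑ j ∈ S, w i j) - z < 0) := by
    intro S
    have hS := h (fun i => decide (i ∈ S))
    have hc : (Finset.univ.filter (fun i => decide (i ∈ S) = true)) = S := by
      ext i; simp
    have hs : (∑ i, ∑ j, w i j * (if decide (i ∈ S) = true then (1:ℝ) else 0) *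
        (if decide (j ∈ S) = true then (1:ℝ) else 0)) = ∑ i ∈ S, ∑ j ∈ S, w i j := by
      simp [Finset.sum_ite_mem, ← Finset.sum_filter]
    simp only [hc, hs] at hS
    exact hS
  obtain ⟨a, b, c, hab, hac, hbc⟩ : ∃ a b c : Fin n, a ≠ b ∧ a ≠ c ∧ b ≠ c :=
    ⟨⟨0, by omega⟩, ⟨1, by omega⟩, ⟨2, by omega⟩, by simp, by simp, by simp⟩
  have h0 := (key ∅).2 (by simp)
  have h1 := (key {a}).1 (by simp)
  have h2 := (key {b}).1 (by simp)
  have h3 := (key {c}).1 (by simp)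
  have h4 := (key {a, b}).2 (by rw [Finset.card_pair hab]; decide)
  have h5 := (key {a, c}).2 (by rw [Finset.card_pair hac]; decide)
  have h6 := (key {b, c}).2 (by rw [Finset.card_pair hbc]; decide)
  have h7 := (key {a, b, c}).1 (by
    rw [Finset.card_eq_three.mpr ⟨a, b, c, hab, hac, hbc, rfl⟩]; decide)
  have ha : a ∉ ({b, c} : Finset (Fin n)) := by simp [hab, hac]
  rw [Finset.sum_insert ha] at h7
  simp only [Finset.sum_insert ha, Finset.sum_pair hab, Finset.sum_pair hac,
    Finset.sum_pair hbc, Finset.sum_singleton, Finset.sum_empty] at *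
  linarith
end

section
/- Let n ≥ 3. There exist no w ∈ ℝ^{n×n} and z ∈ ℝ such that for every x ∈ {−1,1}^n, one has ∑_{i,j} w_{ij} x_i x_j − z ≥ 0 whenever the number of +1 entries of x is odd, and ∑_{i,j} w_{ij} x_i x_j − z < 0 whenever the number of +1 entries of x is even. That is, a tensor product perceptron (even with bias) cannot express the parity function on the centred Boolean hypercube {−1,1}^n for n ≥ 3 (and hence also on its normalised version, since all points of {−1,1}^n share the same norm). -/
def X9 (m : ℕ) (a b c : Bool) : Fin (m+3) → Bool :=
  Fin.cons a (Fin.cons b (Fin.cons c (fun _ => false)))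

theorem card9 (m : ℕ) (a b c : Bool) :
    (Finset.univ.filter (fun i => X9 m a b c i = true)).card = a.toNat + b.toNat + c.toNat := by
  rw [Finset.card_filter, Fin.sum_univ_succ, Fin.sum_univ_succ, Fin.sum_univ_succ]
  cases a <;> cases b <;> cases c <;> simp only [X9, Fin.cons_zero, Fin.cons_succ] <;> simp

def R9 (m : ℕ) (a b c : Bool) (i : Fin (m+3)) : ℝ := if X9 m a b c i then 1 else -1

theorem cases9 (m : ℕ) (i : Fin (m+3)) :
    (∀ a b c, R9 m a b c i = if a then 1 else -1) ∨ (∀ a b c, R9 m a b c i = if b then 1 else -1) ∨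
    (∀ a b c, R9 m a b c i = if c then 1 else -1) ∨ (∀ a b c, R9 m a b c i = -1) := by
  refine Fin.cases ?_ (fun i => Fin.cases ?_ (fun i => Fin.cases ?_ (fun i => ?_) i) i) i
  · left; intros; simp only [R9, X9, Fin.cons_zero, Fin.cons_succ]; try simp
  · right; left; intros; simp only [R9, X9, Fin.cons_zero, Fin.cons_succ]; try simp
  · right; right; left; intros; simp only [R9, X9, Fin.cons_zero, Fin.cons_succ]; try simp
  · right; right; right; intros; simp only [R9, X9, Fin.cons_zero, Fin.cons_succ]; try simp

theorem alt9 (m : ℕ) (w : Fin (m+3) → Fin (m+3) → ℝ) (Q : Bool → Bool → Bool → ℝ)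
    (hQ : ∀ a b c, Q a b c = ∑ i, ∑ j, w i j * R9 m a b c i * R9 m a b c j) :
    Q true true true + Q true false false + Q false true false + Q false false true
    = Q false false false + Q true true false + Q true false true + Q false true true := by
  simp only [hQ, ← Finset.sum_add_distrib]
  refine Finset.sum_congr rfl fun i _ => Finset.sum_congr rfl fun j _ => ?_
  rcases cases9 m i with h | h | h | h <;> rcases cases9 m j with h' | h' | h' | h' <;>
    simp only [h, h'] <;> simp

/-- For `n ≥ 3`, no tensor product perceptron (even with a bias `z`) expresses
the parity function on the centred Boolean hypercube `{-1,1}^n`: there are no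
`w ∈ ℝ^{n×n}` and `z ∈ ℝ` such that for every `x ∈ {-1,1}^n`,
`∑_{i,j} w_{ij} x_i x_j − z ≥ 0` when the number of `+1` entries of `x` is odd and `< 0`
when it is even. -/
theorem stmt9 (n : ℕ) (hn : 3 ≤ n) :
    ¬ ∃ (w : Fin n → Fin n → ℝ) (z : ℝ),
      ∀ x : Fin n → Bool,
        let xr : Fin n → ℝ := fun i => if x i then 1 else -1
        (Odd (Finset.univ.filter (fun i => x i = true)).card →
          0 ≤ (∑ i, ∑ j, w i j * xr i * xr j) - z) ∧
        (¬ Odd (Finset.univ.filter (fun i => x i = true)).card →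
          (∑ i, ∑ j, w i j * xr i * xr j) - z < 0) := by
  rintro ⟨w, z, h⟩
  obtain ⟨m, rfl⟩ : ∃ m, n = m + 3 := ⟨n - 3, by omega⟩
  have key := alt9 m w _ (fun _ _ _ => rfl)
  have ho : ∀ a b c : Bool, Odd (a.toNat + b.toNat + c.toNat) →
      0 ≤ (∑ i, ∑ j, w i j * R9 m a b c i * R9 m a b c j) - z := fun a b c hh =>
    (h (X9 m a b c)).1 (by rw [card9]; exact hh)
  have he : ∀ a b c : Bool, ¬ Odd (a.toNat + b.toNat + c.toNat) →
      (∑ i, ∑ j, w i j * R9 m a b c i * R9 m a b c j) - z < 0 := fun a b c hh =>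
    (h (X9 m a b c)).2 (by rw [card9]; exact hh)
  have h1 := ho true true true (by decide)
  have h2 := ho true false false (by decide)
  have h3 := ho false true false (by decide)
  have h4 := ho false false true (by decide)
  have h5 := he false false false (by decide)
  have h6 := he true true false (by decide)
  have h7 := he true false true (by decide)
  have h8 := he false true true (by decide)
  linarith
end

section
/- For every n ≥ 1, the number of distinct functions f : {0,1}^n ∖ {0} → {0,1} that can be written in the form f(x) = 1 if ∑_{i,j} w_{ij} x̂_i x̂_j ≥ 0 and f(x) = 0 otherwise, for some w ∈ ℝ^{n×n}, where x̂ = x / ‖x‖₂, is at most 2^{n³ + n² · log₂(e) + 1}. In particular, as a fraction of all 2^{2^n − 1} Boolean functions on {0,1}^n ∖ {0}, the set of functions expressible by a QNN with amplitude encoding tends to 0 as n → ∞. -/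
/-- The number of distinct Boolean functions on `{0,1}^n ∖ {0}` expressible by a tensor
product perceptron acting on amplitude-encoded (i.e. `ℓ²`-normalised) inputs,
classifying `x` as `1` iff `∑_{i,j} w_{ij} x̂_i x̂_j ≥ 0`. -/
noncomputable def exprCount (n : ℕ) : ℕ :=
  Set.ncard {f : {x : Fin n → Bool // x ≠ fun _ => false} → Bool |
    ∃ w : Fin n → Fin n → ℝ,
      ∀ x : {x : Fin n → Bool // x ≠ fun _ => false},
        (f x = true ↔
          0 ≤ ∑ i, ∑ j, w i j *
            ((if x.1 i then (1 : ℝ) else 0) /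
              Real.sqrt (∑ k, (if x.1 k then (1 : ℝ) else 0) ^ 2)) *
            ((if x.1 j then (1 : ℝ) else 0) /
              Real.sqrt (∑ k, (if x.1 k then (1 : ℝ) else 0) ^ 2)))}

open Finset in
theorem vc_aux {X : Type*} [Fintype X] [DecidableEq X] (d : ℕ) {ι : Type*} [Fintype ι]
    (hd : Fintype.card ι = d)
    (v : X → ι → ℝ) (A : Finset (Finset X))
    (hA : ∀ s ∈ A, ∃ w : ι → ℝ, ∀ x, x ∈ s ↔ 0 ≤ ∑ i, w i * v x i) :
    A.vcDim ≤ d := by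
  unfold Finset.vcDim
  refine Finset.sup_le fun s hs => ?_
  rw [Finset.mem_shatterer] at hs
  by_contra hlt
  have hnl : ¬ LinearIndependent ℝ (fun i : s => v i) := by
    intro h
    have := h.fintype_card_le_finrank
    simp at this
    omega
  rw [Fintype.not_linearIndependent_iff] at hnl
  have key : ∃ g : s → ℝ, ∑ i, g i • v i = 0 ∧ ∃ i, g i < 0 := by
    obtain ⟨g, hg, i, hi⟩ := hnl
    rcases lt_or_gt_of_ne hi with h | h
    · exact ⟨g, hg, i, h⟩
    · refine ⟨fun j => - g j, ?_, i, by simpa using h⟩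
      simp only [neg_smul, Finset.sum_neg_distrib, hg, neg_zero]
  obtain ⟨g, hg, i₀, hi₀⟩ := key
  obtain ⟨u, hu, hsu⟩ := hs
    (t := (Finset.univ.filter (fun i : s => 0 ≤ g i)).map (Function.Embedding.subtype _))
    (by intro x hx; simp at hx; exact hx.1)
  obtain ⟨w, hw⟩ := hA u hu
  have hmem : ∀ i : s, (i : X) ∈ u ↔ 0 ≤ g i := by
    intro i
    have : (i : X) ∈ s ∩ u ↔ 0 ≤ g i := by
      rw [hsu]; simp
    rw [← this]; simp
  have hz : ∑ i : s, g i * ∑ k, w k * v i k = 0 := by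
    have h1 : ∀ k, ∑ i : s, g i * v i k = 0 := by
      intro k
      have := congrFun hg k
      simpa using this
    simp_rw [Finset.mul_sum]
    rw [Finset.sum_comm]
    refine Finset.sum_eq_zero fun k _ => ?_
    have : ∑ i : s, g i * (w k * v i k) = w k * ∑ i : s, g i * v i k := by
      rw [Finset.mul_sum]; exact Finset.sum_congr rfl fun _ _ => by ring
    rw [this, h1, mul_zero]
  have hpos : 0 < ∑ i : s, g i * ∑ k, w k * v i k := by
    have hneg : ∀ i : s, g i < 0 → 0 < g i * ∑ k, w k * v i k := by
      intro i hi
      have : ¬ (0 ≤ ∑ k, w k * v i k) := by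
        rw [← hw, hmem]; exact not_le.mpr hi
      exact mul_pos_of_neg_of_neg hi (not_le.mp this)
    refine Finset.sum_pos' (fun i _ => ?_) ⟨i₀, Finset.mem_univ _, hneg i₀ hi₀⟩
    by_cases h : 0 ≤ g i
    · exact mul_nonneg h ((hw _).1 ((hmem i).2 h))
    · exact (hneg i (not_le.mp h)).le
  exact absurd hz hpos.ne'

theorem choose_sum_aux (N d : ℕ) (hN : 1 ≤ N) :
    ((∑ k ∈ Finset.Iic d, N.choose k : ℕ) : ℝ) ≤ (N : ℝ) ^ d * Real.exp 1 := by
  have hN' : (1 : ℝ) ≤ N := by exact_mod_cast hN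
  push_cast
  calc ∑ k ∈ Finset.Iic d, (N.choose k : ℝ)
      ≤ ∑ k ∈ Finset.Iic d, (N : ℝ) ^ d * (1 ^ k / (k.factorial : ℝ)) := by
        refine Finset.sum_le_sum fun k hk => ?_
        have h1 : (N.choose k : ℝ) ≤ (N : ℝ) ^ k / (k.factorial : ℝ) := Nat.choose_le_pow_div k N
        refine h1.trans ?_
        rw [one_pow, mul_one_div]
        gcongr
        simpa using hk
    _ = (N : ℝ) ^ d * ∑ k ∈ Finset.range (d + 1), (1 ^ k / (k.factorial : ℝ)) := by
        rw [Finset.mul_sum, Nat.range_succ_eq_Iic]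
    _ ≤ _ := by
        gcongr
        exact Real.sum_le_exp_of_nonneg zero_le_one _

open Classical in
theorem exprCount_aux (n : ℕ) (hn : 1 ≤ n) :
    (exprCount n : ℝ) ≤ (2 : ℝ) ^ (n ^ 3) * Real.exp 1 := by
  unfold exprCount
  set S := {f : {x : Fin n → Bool // x ≠ fun _ => false} → Bool |
    ∃ w : Fin n → Fin n → ℝ,
      ∀ x : {x : Fin n → Bool // x ≠ fun _ => false},
        (f x = true ↔
          0 ≤ ∑ i, ∑ j, w i j *
            ((if x.1 i then (1 : ℝ) else 0) /
              Real.sqrt (∑ k, (if x.1 k then (1 : ℝ) else 0) ^ 2)) *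
            ((if x.1 j then (1 : ℝ) else 0) /
              Real.sqrt (∑ k, (if x.1 k then (1 : ℝ) else 0) ^ 2)))} with hS
  let φ : ({x : Fin n → Bool // x ≠ fun _ => false} → Bool) →
      Finset {x : Fin n → Bool // x ≠ fun _ => false} :=
    fun f => Finset.univ.filter (fun x => f x = true)
  have hφ : Function.Injective φ := by
    intro f g h
    funext x
    have : x ∈ φ f ↔ x ∈ φ g := by rw [h]
    simp only [φ, Finset.mem_filter, Finset.mem_univ, true_and] at this
    exact Bool.eq_iff_iff.mpr this
  have hcard : S.ncard = (S.toFinset.image φ).card := by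
    rw [Finset.card_image_of_injective _ hφ, Set.ncard_eq_toFinset_card']
  rw [hcard]
  have hvc : (S.toFinset.image φ).vcDim ≤ n ^ 2 := by
    refine vc_aux (ι := Fin n × Fin n) (n ^ 2) (by simp [sq])
      (fun x p => ((if x.1 p.1 then (1 : ℝ) else 0) /
              Real.sqrt (∑ k, (if x.1 k then (1 : ℝ) else 0) ^ 2)) *
            ((if x.1 p.2 then (1 : ℝ) else 0) /
              Real.sqrt (∑ k, (if x.1 k then (1 : ℝ) else 0) ^ 2))) _ ?_
    intro s hs
    rw [Finset.mem_image] at hs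
    obtain ⟨f, hf, rfl⟩ := hs
    rw [Set.mem_toFinset] at hf
    obtain ⟨w, hw⟩ := hf
    refine ⟨fun p => w p.1 p.2, fun x => ?_⟩
    simp only [φ, Finset.mem_filter, Finset.mem_univ, true_and]
    rw [hw x, Fintype.sum_prod_type]
    simp only [mul_assoc]
  have hX : Fintype.card {x : Fin n → Bool // x ≠ fun _ => false} ≤ 2 ^ n := by
    refine (Fintype.card_subtype_le _).trans ?_
    simp
  have h1X : 1 ≤ Fintype.card {x : Fin n → Bool // x ≠ fun _ => false} := by
    rw [Nat.one_le_iff_ne_zero, ← Nat.pos_iff_ne_zero, Fintype.card_pos_iff]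
    exact ⟨⟨fun _ => true, fun h => by simpa using congrFun h ⟨0, hn⟩⟩⟩
  have h1 := (Finset.card_le_card_shatterer (S.toFinset.image φ)).trans
    Finset.card_shatterer_le_sum_vcDim
  have h2 := h1.trans (Finset.sum_le_sum_of_subset (Finset.Iic_subset_Iic.mpr hvc))
  have h3 := (Nat.cast_le (α := ℝ)).mpr h2
  refine h3.trans ((choose_sum_aux _ _ h1X).trans ?_)
  have h4 : ((Fintype.card {x : Fin n → Bool // x ≠ fun _ => false} : ℕ) : ℝ) ≤ 2 ^ n := by
    exact_mod_cast hX
  have h5 : (2 : ℝ) ^ (n ^ 3) = ((2 : ℝ) ^ n) ^ (n ^ 2) := by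
    rw [← pow_mul]; congr 1; ring
  rw [h5]
  gcongr

/-- For every `n ≥ 1`, the number of Boolean functions on `{0,1}^n ∖ {0}`
expressible by a QNN with amplitude encoding (equivalently, by a tensor product perceptron
on normalised inputs) is at most `2^{n³ + n²·log₂(e) + 1}`; as a fraction of all
`2^{2^n − 1}` Boolean functions, it tends to `0` as `n → ∞`. -/
theorem stmt11 :
    (∀ n : ℕ, 1 ≤ n →
      (exprCount n : ℝ)
        ≤ (2 : ℝ) ^ ((n : ℝ) ^ 3 + (n : ℝ) ^ 2 * Real.logb 2 (Real.exp 1) + 1))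
    ∧ Filter.Tendsto (fun n : ℕ => (exprCount n : ℝ) / 2 ^ (2 ^ n - 1 : ℕ))
        Filter.atTop (nhds 0) := by
  constructor
  · intro n hn
    refine (exprCount_aux n hn).trans ?_
    have hl : (0 : ℝ) ≤ Real.logb 2 (Real.exp 1) :=
      Real.logb_nonneg (by norm_num) (Real.one_le_exp zero_le_one)
    have he : Real.exp 1 = (2 : ℝ) ^ Real.logb 2 (Real.exp 1) :=
      (Real.rpow_logb (by norm_num) (by norm_num) (Real.exp_pos 1)).symm
    have h2 : (2 : ℝ) ^ (n ^ 3) * Real.exp 1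
        = (2 : ℝ) ^ ((n : ℝ) ^ 3 + Real.logb 2 (Real.exp 1)) := by
      rw [Real.rpow_add (by norm_num), ← he]
      congr 1
      rw [← Real.rpow_natCast]; push_cast; rfl
    rw [h2]
    refine Real.rpow_le_rpow_of_exponent_le (by norm_num) ?_
    have hn' : (1 : ℝ) ≤ (n : ℝ) ^ 2 := one_le_pow₀ (by exact_mod_cast hn)
    nlinarith
  · have hev : ∀ᶠ n : ℕ in Filter.atTop, 1 ≤ n ∧ n ^ 3 + 3 + n ≤ 2 ^ n := by
      have ht := tendsto_pow_const_div_const_pow_of_one_lt 3 (r := (2 : ℝ)) (by norm_num)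
      have := ht.eventually (gt_mem_nhds (show (0 : ℝ) < 1 / 5 by norm_num))
      filter_upwards [this, Filter.eventually_ge_atTop 1] with n h1 h2
      refine ⟨h2, ?_⟩
      rw [div_lt_iff₀ (by positivity)] at h1
      have h3 : 5 * n ^ 3 < 2 ^ n := by
        have : (5 : ℝ) * (n : ℝ) ^ 3 < 2 ^ n := by linarith
        exact_mod_cast this
      have h4 : n ≤ n ^ 3 := Nat.le_self_pow (by norm_num) n
      omega
    refine squeeze_zero' (g := fun n : ℕ => (1 / 2 : ℝ) ^ n)
      (Filter.Eventually.of_forall fun n => by positivity) ?_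
      (tendsto_pow_atTop_nhds_zero_of_lt_one (by norm_num) (by norm_num))
    filter_upwards [hev] with n hn
    obtain ⟨h1, h2⟩ := hn
    rw [div_le_iff₀ (by positivity)]
    refine (exprCount_aux n h1).trans ?_
    have he : Real.exp 1 ≤ 2 ^ 2 := by
      have := Real.exp_one_lt_d9
      linarith
    calc (2 : ℝ) ^ (n ^ 3) * Real.exp 1 ≤ 2 ^ (n ^ 3) * 2 ^ 2 := by gcongr
      _ = (1 / 2 : ℝ) ^ n * 2 ^ (n ^ 3 + 2 + n) := by
        rw [pow_add _ (n ^ 3 + 2), pow_add, one_div, inv_pow]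
        field_simp
      _ ≤ _ := by
        gcongr
        · norm_num
        · omega
end

section
/- Let N ≥ 1 and let w₁, …, w_N ∈ [−1, 1] be real numbers, with W = diag(w₁, …, w_N). Define the 2N×2N matrix U = (1/√2) [[√(I+W), −√(I−W)], [√(I−W), √(I+W)]], where the square roots are taken entrywise on the diagonal. Then: (i) U is unitary; and (ii) for every x ∈ ℝ^N with x_i ≥ 0 for all i and ∑_i x_i = 1, setting v = (√x₁, …, √x_N, 0, …, 0) ∈ ℂ^{2N} and Z = diag(I_N, −I_N), one has v† U† Z U v = ∑_i w_i x_i. Hence a QNN can express any function a perceptron with weights in [−1,1] can express on unit-norm data in the positive orthant. -/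
open Matrix

/-- For weights `w₁, …, w_N ∈ [-1,1]` with `W = diag(w)`, the matrix
`U = (1/√2) [[√(I+W), -√(I−W)], [√(I−W), √(I+W)]]` (entrywise square roots on the diagonal)
is unitary, and for every probability vector `x` (nonnegative entries summing to 1),
with `v = (√x₁, …, √x_N, 0, …, 0)` and `Z = diag(I, -I)`, one has
`v† U† Z U v = ∑ᵢ wᵢ xᵢ`. -/
theorem stmt12 (N : ℕ) (hN : 1 ≤ N) (w : Fin N → ℝ)
    (hw : ∀ i, w i ∈ Set.Icc (-1 : ℝ) 1) :
    let A : Matrix (Fin N) (Fin N) ℂ :=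
      Matrix.diagonal fun i => (Real.sqrt (1 + w i) : ℂ)
    let B : Matrix (Fin N) (Fin N) ℂ :=
      Matrix.diagonal fun i => (Real.sqrt (1 - w i) : ℂ)
    let U : Matrix (Fin N ⊕ Fin N) (Fin N ⊕ Fin N) ℂ :=
      ((Real.sqrt 2)⁻¹ : ℂ) • Matrix.fromBlocks A (-B) B A
    U ∈ Matrix.unitaryGroup (Fin N ⊕ Fin N) ℂ ∧
    ∀ x : Fin N → ℝ, (∀ i, 0 ≤ x i) → (∑ i, x i) = 1 →
      star (Sum.elim (fun i => (Real.sqrt (x i) : ℂ)) 0) ⬝ᵥ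
        ((Uᴴ * Matrix.fromBlocks 1 0 0 (-1) * U) *ᵥ
          Sum.elim (fun i => (Real.sqrt (x i) : ℂ)) 0)
      = ((∑ i, w i * x i : ℝ) : ℂ) := by
  intro A B U
  have hs : ((Real.sqrt 2 : ℂ))⁻¹ * ((Real.sqrt 2 : ℂ))⁻¹ = 1 / 2 := by
    rw [← mul_inv, ← Complex.ofReal_mul, Real.mul_self_sqrt (by norm_num)]
    norm_num
  have hA : ∀ i, (Real.sqrt (1 + w i) : ℂ) * (Real.sqrt (1 + w i) : ℂ) = 1 + w i := by
    intro i
    rw [← Complex.ofReal_mul, Real.mul_self_sqrt (by linarith [(hw i).1])]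
    push_cast; rfl
  have hB : ∀ i, (Real.sqrt (1 - w i) : ℂ) * (Real.sqrt (1 - w i) : ℂ) = 1 - w i := by
    intro i
    rw [← Complex.ofReal_mul, Real.mul_self_sqrt (by linarith [(hw i).2])]
    push_cast; rfl
  have hAA : A * A = Matrix.diagonal fun i => (1 + w i : ℂ) := by
    simp only [A, Matrix.diagonal_mul_diagonal, hA]
  have hBB : B * B = Matrix.diagonal fun i => (1 - w i : ℂ) := by
    simp only [B, Matrix.diagonal_mul_diagonal, hB]
  have hAB : A * B = B * A := by
    simp only [A, B, Matrix.diagonal_mul_diagonal, mul_comm]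
  have hAh : Aᴴ = A := by
    simp only [A, Matrix.diagonal_conjTranspose]
    congr 1; ext i; simp
  have hBh : Bᴴ = B := by
    simp only [B, Matrix.diagonal_conjTranspose]
    congr 1; ext i; simp
  have hUh : Uᴴ = ((Real.sqrt 2)⁻¹ : ℂ) • Matrix.fromBlocks A B (-B) A := by
    simp only [U, Matrix.conjTranspose_smul, Matrix.fromBlocks_conjTranspose,
      Matrix.conjTranspose_neg, hAh, hBh]
    congr 1; simp
  have hsum : (1 / 2 : ℂ) • (A * A + B * B) = 1 := by
    rw [hAA, hBB, Matrix.diagonal_add, ← Matrix.diagonal_smul, ← Matrix.diagonal_one]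
    congr 1; ext i; simp; ring
  have hdiff : (1 / 2 : ℂ) • (A * A - B * B) = Matrix.diagonal fun i => (w i : ℂ) := by
    rw [hAA, hBB, Matrix.diagonal_sub, ← Matrix.diagonal_smul]
    congr 1; ext i; simp; ring
  refine ⟨?_, ?_⟩
  · rw [Matrix.mem_unitaryGroup_iff', Matrix.star_eq_conjTranspose, hUh]
    simp only [U, Matrix.smul_mul, Matrix.mul_smul, smul_smul, hs, Matrix.fromBlocks_multiply]
    rw [← Matrix.fromBlocks_one, Matrix.fromBlocks_smul]
    congr 1
    · simp [hAB]
    · simp [hAB]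
    · rw [← hsum]; simp [add_comm]
  · intro x hx _
    have hM : Uᴴ * Matrix.fromBlocks 1 0 0 (-1) * U = Matrix.fromBlocks
        (Matrix.diagonal fun i => (w i : ℂ)) ((1 / 2 : ℂ) • (-(A * B) - B * A))
        ((1 / 2 : ℂ) • (-(B * A) - A * B)) ((1 / 2 : ℂ) • (B * B - A * A)) := by
      rw [hUh, ← hdiff]
      simp only [U, Matrix.smul_mul, Matrix.mul_smul, Matrix.fromBlocks_multiply,
        Matrix.fromBlocks_smul]
      congr 1 <;> simp [sub_eq_add_neg, smul_smul, hs]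
    rw [hM, Matrix.fromBlocks_mulVec]
    simp only [dotProduct, Fintype.sum_sum_type]
    simp only [Pi.star_apply, Sum.elim_inl, Sum.elim_inr, Sum.elim_comp_inl, Sum.elim_comp_inr,
      Matrix.mulVec_zero, add_zero, Matrix.mulVec_diagonal, Pi.zero_apply, star_zero, zero_mul,
      Finset.sum_const_zero]
    push_cast
    refine Finset.sum_congr rfl fun i _ => ?_
    have h : (Real.sqrt (x i) : ℂ) * (Real.sqrt (x i) : ℂ) = x i := by
      rw [← Complex.ofReal_mul, Real.mul_self_sqrt (hx i)]
    simp only [RCLike.star_def, Complex.conj_ofReal]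
    rw [← h]; ring
end

section
/- Let N ≥ 1 and let W⁰ = diag(w⁰₁, …, w⁰_N) and W¹ = diag(w¹₁, …, w¹_N) be real diagonal matrices with all entries in [−1, 1]. Define the 4N×4N matrices U₀ = (1/√2) [[√(I+W⁰), −√(I−W⁰), 0, 0], [√(I−W⁰), √(I+W⁰), 0, 0], [0, 0, √(I+W⁰), −√(I−W⁰)], [0, 0, √(I−W⁰), √(I+W⁰)]] and U₁ = (1/√2) [[√(I+W¹), 0, −√(I−W¹), 0], [0, √(I+W¹), 0, −√(I−W¹)], [√(I−W¹), 0, √(I+W¹), 0], [0, √(I−W¹), 0, √(I+W¹)]] (entrywise square roots on the diagonal, blocks of size N×N), and let Z₀ = I₂ ⊗ σ_Z ⊗ I_N and Z₁ = σ_Z ⊗ I₂ ⊗ I_N. Then for every x ∈ ℝ^N with x_j ≥ 0 and ∑_j x_j = 1, setting v = (√x₁, …, √x_N, 0, …, 0) ∈ ℂ^{4N}, one has v† (U₁U₀)† Z₀ (U₁U₀) v = ∑_j w⁰_j x_j and v† (U₁U₀)† Z₁ (U₁U₀) v = ∑_j w¹_j x_j. That is, two perceptrons can be simultaneously encoded on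 two readout qubits. -/
open Matrix

/-- Two perceptrons with weights `w⁰, w¹ ∈ [-1,1]^N` can be simultaneously
encoded on two readout qubits.  With the explicit `4N×4N` unitaries `U₀`, `U₁` built from
`W⁰ = diag(w⁰)` and `W¹ = diag(w¹)` (entrywise square roots on the diagonal), and the
readout operators `Z₀ = I₂ ⊗ σ_Z ⊗ I_N`, `Z₁ = σ_Z ⊗ I₂ ⊗ I_N`, for every probability
vector `x` and `v = (√x₁, …, √x_N, 0, …, 0)` one has
`v† (U₁U₀)† Z₀ (U₁U₀) v = ∑ⱼ w⁰ⱼ xⱼ` and `v† (U₁U₀)† Z₁ (U₁U₀) v = ∑ⱼ w¹ⱼ xⱼ`. -/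
theorem stmt13 (N : ℕ) (hN : 1 ≤ N) (w0 w1 : Fin N → ℝ)
    (hw0 : ∀ j, w0 j ∈ Set.Icc (-1 : ℝ) 1) (hw1 : ∀ j, w1 j ∈ Set.Icc (-1 : ℝ) 1) :
    let A0 : Matrix (Fin N) (Fin N) ℂ :=
      Matrix.diagonal fun j => (Real.sqrt (1 + w0 j) : ℂ)
    let B0 : Matrix (Fin N) (Fin N) ℂ :=
      Matrix.diagonal fun j => (Real.sqrt (1 - w0 j) : ℂ)
    let A1 : Matrix (Fin N) (Fin N) ℂ :=
      Matrix.diagonal fun j => (Real.sqrt (1 + w1 j) : ℂ)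
    let B1 : Matrix (Fin N) (Fin N) ℂ :=
      Matrix.diagonal fun j => (Real.sqrt (1 - w1 j) : ℂ)
    let U0 : Matrix ((Fin N ⊕ Fin N) ⊕ (Fin N ⊕ Fin N))
        ((Fin N ⊕ Fin N) ⊕ (Fin N ⊕ Fin N)) ℂ :=
      ((Real.sqrt 2)⁻¹ : ℂ) •
        Matrix.fromBlocks (Matrix.fromBlocks A0 (-B0) B0 A0) 0 0
          (Matrix.fromBlocks A0 (-B0) B0 A0)
    let U1 : Matrix ((Fin N ⊕ Fin N) ⊕ (Fin N ⊕ Fin N))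
        ((Fin N ⊕ Fin N) ⊕ (Fin N ⊕ Fin N)) ℂ :=
      ((Real.sqrt 2)⁻¹ : ℂ) •
        Matrix.fromBlocks (Matrix.fromBlocks A1 0 0 A1)
          (Matrix.fromBlocks (-B1) 0 0 (-B1))
          (Matrix.fromBlocks B1 0 0 B1)
          (Matrix.fromBlocks A1 0 0 A1)
    let Z0 : Matrix ((Fin N ⊕ Fin N) ⊕ (Fin N ⊕ Fin N))
        ((Fin N ⊕ Fin N) ⊕ (Fin N ⊕ Fin N)) ℂ :=
      Matrix.fromBlocks (Matrix.fromBlocks 1 0 0 (-1)) 0 0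
        (Matrix.fromBlocks 1 0 0 (-1))
    let Z1 : Matrix ((Fin N ⊕ Fin N) ⊕ (Fin N ⊕ Fin N))
        ((Fin N ⊕ Fin N) ⊕ (Fin N ⊕ Fin N)) ℂ :=
      Matrix.fromBlocks 1 0 0 (-1)
    ∀ x : Fin N → ℝ, (∀ j, 0 ≤ x j) → (∑ j, x j) = 1 →
      let v : ((Fin N ⊕ Fin N) ⊕ (Fin N ⊕ Fin N)) → ℂ :=
        Sum.elim (Sum.elim (fun j => (Real.sqrt (x j) : ℂ)) 0) 0
      star v ⬝ᵥ (((U1 * U0)ᴴ * Z0 * (U1 * U0)) *ᵥ v)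
          = ((∑ j, w0 j * x j : ℝ) : ℂ) ∧
      star v ⬝ᵥ (((U1 * U0)ᴴ * Z1 * (U1 * U0)) *ᵥ v)
          = ((∑ j, w1 j * x j : ℝ) : ℂ) := by
  intro A0 B0 A1 B1 U0 U1 Z0 Z1 x hx hs v
  have key : ∀ Z : Matrix ((Fin N ⊕ Fin N) ⊕ (Fin N ⊕ Fin N))
        ((Fin N ⊕ Fin N) ⊕ (Fin N ⊕ Fin N)) ℂ,
      star v ⬝ᵥ (((U1 * U0)ᴴ * Z * (U1 * U0)) *ᵥ v)
        = star ((U1 * U0) *ᵥ v) ⬝ᵥ (Z *ᵥ ((U1 * U0) *ᵥ v)) := by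
    intro Z
    rw [Matrix.star_mulVec, ← Matrix.dotProduct_mulVec, Matrix.mulVec_mulVec,
      Matrix.mulVec_mulVec, Matrix.mul_assoc]
  have h2 : ((Real.sqrt 2 : ℂ)⁻¹) * ((Real.sqrt 2 : ℂ)⁻¹) = 1 / 2 := by
    rw [← mul_inv, ← Complex.ofReal_mul, Real.mul_self_sqrt (by norm_num)]
    norm_num
  have hv : (U1 * U0) *ᵥ v = Sum.elim
      (Sum.elim
        (fun j => ((1 / 2 * (√(1 + w1 j) * √(1 + w0 j) * √(x j)) : ℝ) : ℂ))
        (fun j => ((1 / 2 * (√(1 + w1 j) * √(1 - w0 j) * √(x j)) : ℝ) : ℂ)))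
      (Sum.elim
        (fun j => ((1 / 2 * (√(1 - w1 j) * √(1 + w0 j) * √(x j)) : ℝ) : ℂ))
        (fun j => ((1 / 2 * (√(1 - w1 j) * √(1 - w0 j) * √(x j)) : ℝ) : ℂ))) := by
    rw [← Matrix.mulVec_mulVec]
    simp only [U1, U0, v, Matrix.smul_mulVec, Matrix.mulVec_smul, smul_smul, h2]
    simp only [Matrix.fromBlocks_mulVec, Sum.elim_comp_inl, Sum.elim_comp_inr]
    ext ((j | j) | (j | j)) <;>
      simp [A0, B0, A1, B1, Matrix.mulVec_diagonal, Matrix.fromBlocks_mulVec] <;> ring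
  have e : ∀ w : ℝ, w ∈ Set.Icc (-1 : ℝ) 1 → √(1 + w) ^ 2 = 1 + w ∧ √(1 - w) ^ 2 = 1 - w := by
    intro w hw
    exact ⟨Real.sq_sqrt (by linarith [hw.1]), Real.sq_sqrt (by linarith [hw.2])⟩
  constructor
  all_goals
    rw [key, hv]
    simp only [Z0, Z1, Matrix.fromBlocks_mulVec, Sum.elim_comp_inl, Sum.elim_comp_inr,
      dotProduct, Fintype.sum_sum_type, Pi.star_apply, Sum.elim_inl, Sum.elim_inr,
      Matrix.one_mulVec, Matrix.zero_mulVec, Matrix.neg_mulVec, Pi.add_apply, Pi.neg_apply,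
      Pi.zero_apply, add_zero, zero_add, RCLike.star_def, Complex.conj_ofReal]
    simp only [← Finset.sum_add_distrib]
    rw [Complex.ofReal_sum]
    refine Finset.sum_congr rfl fun j _ => ?_
    norm_cast
    obtain ⟨a, b⟩ := e _ (hw0 j)
    obtain ⟨c, d⟩ := e _ (hw1 j)
    have f := Real.sq_sqrt (hx j)
    ring_nf at a b c d f ⊢
    simp only [a, b, c, d, f]
    ring
end

section
/- Let N ≥ 1, d ≥ 1, and let W¹, …, W^d be real diagonal N×N matrices with all entries in [−1, 1]. Then there exists a unitary matrix U ∈ M_{2^d · N}(ℂ) such that for every x ∈ ℝ^N with x_j ≥ 0 for all j and ∑_j x_j = 1, setting v ∈ ℂ^{2^d · N} to have entries √x_j in its first N coordinates and 0 elsewhere, and setting Z_i = I₂^{⊗(i−1)} ⊗ σ_Z ⊗ I₂^{⊗(d−i)} ⊗ I_N for each i = 1, …, d, one has v† U† Z_i U v = ∑_j (Wⁱ)_{jj} x_j simultaneously for every i. That is, a QNN with d readout qubits can simultaneously and independently encode d perceptrons. -/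
open Matrix

noncomputable def rotE (w : ℝ) : Bool → Bool → ℝ
  | false, false => Real.sqrt ((1 + w) / 2)
  | false, true => - Real.sqrt ((1 - w) / 2)
  | true, false => Real.sqrt ((1 - w) / 2)
  | true, true => Real.sqrt ((1 + w) / 2)

noncomputable def bigU {N d : ℕ} (W : Fin d → Fin N → ℝ) :
    Matrix ((Fin d → Bool) × Fin N) ((Fin d → Bool) × Fin N) ℂ :=
  fun p q => if p.2 = q.2 then ∏ l, ((rotE (W l q.2) (p.1 l) (q.1 l) : ℝ) : ℂ) else 0

lemma bigU_entry {N d : ℕ} (W : Fin d → Fin N → ℝ) (g : Fin d → Bool → ℂ)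
    (p q : (Fin d → Bool) × Fin N) :
    ((bigU W)ᴴ * Matrix.diagonal (fun r : (Fin d → Bool) × Fin N => ∏ l, g l (r.1 l)) * bigU W) p q
      = if p.2 = q.2 then
          ∏ l, ∑ b, ((rotE (W l q.2) b (p.1 l) : ℝ) : ℂ) * g l b *
            ((rotE (W l q.2) b (q.1 l) : ℝ) : ℂ)
        else 0 := by
  rw [Matrix.mul_apply]
  simp only [Matrix.mul_diagonal, Matrix.conjTranspose_apply, bigU]
  rw [Fintype.sum_prod_type]
  obtain ⟨t, j⟩ := p
  obtain ⟨u, k⟩ := q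
  by_cases h : j = k
  · subst h
    simp only [if_true]
    rw [Finset.prod_univ_sum, Fintype.piFinset_univ]
    refine Finset.sum_congr rfl fun s _ => ?_
    rw [Finset.sum_eq_single j]
    · simp [Finset.prod_mul_distrib]
    · intro b _ hb
      simp [hb]
    · simp
  · simp only [if_neg h]
    refine Finset.sum_eq_zero fun s _ => Finset.sum_eq_zero fun b _ => ?_
    by_cases hb : b = k
    · have : b ≠ j := fun h' => h (h'.symm.trans hb)
      simp [this]
    · simp [hb]

lemma rotE_orth {w : ℝ} (hw : w ∈ Set.Icc (-1 : ℝ) 1) (a c : Bool) :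
    ∑ b, ((rotE w b a : ℝ) : ℂ) * 1 * ((rotE w b c : ℝ) : ℂ) = if a = c then 1 else 0 := by
  have h1 : Real.sqrt ((1 + w) / 2) * Real.sqrt ((1 + w) / 2) = (1 + w) / 2 :=
    Real.mul_self_sqrt (by linarith [hw.1])
  have h2 : Real.sqrt ((1 - w) / 2) * Real.sqrt ((1 - w) / 2) = (1 - w) / 2 :=
    Real.mul_self_sqrt (by linarith [hw.2])
  have key : ∑ b, rotE w b a * rotE w b c = if a = c then 1 else 0 := by
    cases a <;> cases c <;>
      simp only [rotE, Fintype.sum_bool, if_true, reduceCtorEq, if_false] <;> linarith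
  simp only [mul_one]
  have := congrArg (fun r : ℝ => (r : ℂ)) key
  simp only [Complex.ofReal_sum, Complex.ofReal_mul] at this
  rw [this]
  split_ifs <;> simp

lemma rotE_z {w : ℝ} (hw : w ∈ Set.Icc (-1 : ℝ) 1) :
    ∑ b : Bool, ((rotE w b false : ℝ) : ℂ) * (if b then (-1 : ℂ) else 1) *
      ((rotE w b false : ℝ) : ℂ) = (w : ℂ) := by
  have h1 : Real.sqrt ((1 + w) / 2) * Real.sqrt ((1 + w) / 2) = (1 + w) / 2 :=
    Real.mul_self_sqrt (by linarith [hw.1])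
  have h2 : Real.sqrt ((1 - w) / 2) * Real.sqrt ((1 - w) / 2) = (1 - w) / 2 :=
    Real.mul_self_sqrt (by linarith [hw.2])
  have key : -(rotE w true false * rotE w true false) + rotE w false false * rotE w false false
      = w := by
    simp only [rotE]; linarith
  have := congrArg (fun r : ℝ => (r : ℂ)) key
  push_cast at this
  simpa using this

/-- A QNN with `d` readout qubits can simultaneously and independently encode
`d` perceptrons.  The Hilbert space `ℂ^{2^d · N}` is indexed by `(Fin d → Bool) × Fin N`
(the bit string of the `d` qubits together with the `N`-dimensional data register);
`Z_i = I₂^{⊗(i−1)} ⊗ σ_Z ⊗ I₂^{⊗(d−i)} ⊗ I_N` is the diagonal matrix whose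
`((s,j),(s,j))` entry is `-1` if `s i = 1` and `1` otherwise, and the input
`v` has entries `√xⱼ` at the coordinates `(0…0, j)` and `0` elsewhere.  For diagonal weight
matrices `Wⁱ` with entries in `[-1,1]` there is a single unitary `U` such that
`v† U† Z_i U v = ∑ⱼ (Wⁱ)ⱼⱼ xⱼ` simultaneously for every `i`. -/
theorem stmt14 (N d : ℕ) (hN : 1 ≤ N) (hd : 1 ≤ d)
    (W : Fin d → Fin N → ℝ) (hW : ∀ i j, W i j ∈ Set.Icc (-1 : ℝ) 1) :
    ∃ U : Matrix ((Fin d → Bool) × Fin N) ((Fin d → Bool) × Fin N) ℂ,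
      U ∈ Matrix.unitaryGroup ((Fin d → Bool) × Fin N) ℂ ∧
      ∀ x : Fin N → ℝ, (∀ j, 0 ≤ x j) → (∑ j, x j) = 1 →
        let v : (Fin d → Bool) × Fin N → ℂ := fun p =>
          if p.1 = (fun _ => false) then (Real.sqrt (x p.2) : ℂ) else 0
        ∀ i : Fin d,
          star v ⬝ᵥ
            ((Uᴴ *
                Matrix.diagonal (fun p : (Fin d → Bool) × Fin N =>
                  if p.1 i then (-1 : ℂ) else 1) *
              U) *ᵥ v)
          = ((∑ j, W i j * x j : ℝ) : ℂ) := by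
  refine ⟨bigU W, ?_, ?_⟩
  · rw [Matrix.mem_unitaryGroup_iff']
    ext p q
    have h := bigU_entry W (fun _ _ => 1) p q
    simp only [Finset.prod_const_one, Matrix.diagonal_one, Matrix.mul_one] at h
    rw [Matrix.star_eq_conjTranspose, h]
    obtain ⟨t, j⟩ := p
    obtain ⟨u, k⟩ := q
    simp only [rotE_orth (hW _ _), Matrix.one_apply, Prod.mk.injEq]
    by_cases hjk : j = k
    · by_cases htu : t = u
      · simp [hjk, htu]
      · obtain ⟨l, hl⟩ := Function.ne_iff.mp htu
        simp only [hjk, htu, if_true, false_and, if_false]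
        exact Finset.prod_eq_zero (Finset.mem_univ l) (by simp [hl])
    · simp [hjk]
  · intro x hx _ v i
    have hD : (fun p : (Fin d → Bool) × Fin N => if p.1 i then (-1 : ℂ) else 1)
        = fun p => ∏ l, (fun (l : Fin d) (b : Bool) =>
            if l = i then (if b then (-1 : ℂ) else 1) else 1) l (p.1 l) := by
      funext p
      simp
    rw [hD]
    set M := (bigU W)ᴴ * Matrix.diagonal (fun p : (Fin d → Bool) × Fin N =>
      ∏ l, (fun (l : Fin d) (b : Bool) =>
            if l = i then (if b then (-1 : ℂ) else 1) else 1) l (p.1 l)) * bigU W with hM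
    have hent : ∀ j k, M (fun _ => false, j) (fun _ => false, k)
        = if j = k then (W i k : ℂ) else 0 := by
      intro j k
      refine (bigU_entry W (fun (l : Fin d) (b : Bool) =>
            if l = i then (if b then (-1 : ℂ) else 1) else 1) _ _).trans ?_
      dsimp only
      congr 1
      rw [Finset.prod_eq_single i]
      · simpa using rotE_z (hW i k)
      · intro l _ hl
        simp only [if_neg hl]
        rw [rotE_orth (hW l k)]
        simp
      · simp
    have hsum : ∀ f : (Fin d → Bool) × Fin N → ℂ, (∀ p, p.1 ≠ (fun _ => false) → f p = 0) →
        ∑ p, f p = ∑ j, f (fun _ => false, j) := by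
      intro f hf
      rw [Fintype.sum_prod_type, Finset.sum_eq_single (fun _ => false)]
      · intro s _ hs
        exact Finset.sum_eq_zero fun j _ => hf _ hs
      · simp
    have hv : ∀ p, p.1 ≠ (fun _ => false) → v p = 0 := fun p hp => if_neg hp
    have hv' : ∀ j, v (fun _ => false, j) = (Real.sqrt (x j) : ℂ) := fun j => if_pos rfl
    simp only [dotProduct, Matrix.mulVec, Pi.star_apply]
    rw [hsum _ (fun p hp => by rw [hv p hp]; simp)]
    push_cast
    refine Finset.sum_congr rfl fun j _ => ?_
    rw [hsum _ (fun p hp => by rw [hv p hp]; simp)]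
    simp only [hent, hv']
    have hs : ((Real.sqrt (x j) : ℝ) : ℂ) * (Real.sqrt (x j) : ℝ) = (x j : ℂ) := by
      exact_mod_cast Real.mul_self_sqrt (hx j)
    simp only [ite_mul, zero_mul, Finset.sum_ite_eq, Finset.mem_univ, if_true]
    rw [← hs]
    simp only [Complex.star_def, Complex.conj_ofReal]
    ring
end

section
/- Let n ≥ 1 and set N = 2^n. For every function f : {0,1}^n → {0,1} there exists a unitary matrix U ∈ M_{2N}(ℂ) such that for every x ∈ {0,1}^n, letting e_x ∈ ℂ^N denote the standard basis vector indexed by x (basis encoding) and v = (e_x, 0) ∈ ℂ^{2N}, and Z = diag(I_N, −I_N), one has v† U† Z U v > 0 if f(x) = 1 and v† U† Z U v < 0 if f(x) = 0. That is, a QNN with basis encoding can express every Boolean function on n bits. -/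
open Matrix
open scoped ComplexOrder

/-- A QNN with basis encoding can express every Boolean function on `n` bits.
The `2^n`-dimensional Hilbert space is indexed by `Fin n → Bool`; `e_x` is the standard
basis vector indexed by `x`, `v = (e_x, 0)`, and `Z = diag(I, -I)`.  (The inequalities
use the partial order on `ℂ`, so `0 < out` says the output is real and positive.) -/
theorem stmt15 (n : ℕ) (hn : 1 ≤ n) (f : (Fin n → Bool) → Bool) :
    ∃ U : Matrix ((Fin n → Bool) ⊕ (Fin n → Bool)) ((Fin n → Bool) ⊕ (Fin n → Bool)) ℂ,
      U ∈ Matrix.unitaryGroup ((Fin n → Bool) ⊕ (Fin n → Bool)) ℂ ∧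
      ∀ x : Fin n → Bool,
        let e : (Fin n → Bool) → ℂ := fun y => if y = x then 1 else 0
        let v : ((Fin n → Bool) ⊕ (Fin n → Bool)) → ℂ := Sum.elim e 0
        let out : ℂ := star v ⬝ᵥ ((Uᴴ * Matrix.fromBlocks 1 0 0 (-1) * U) *ᵥ v)
        (f x = true → 0 < out) ∧ (f x = false → out < 0) := by
  classical
  set a : (Fin n → Bool) → ℂ := fun y => if f y then 1 else 0 with ha
  set b : (Fin n → Bool) → ℂ := fun y => if f y then 0 else 1 with hb
  have hsa : star a = a := by
    ext y; simp only [ha, Pi.star_apply]; split_ifs <;> simp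
  have hsb : star b = b := by
    ext y; simp only [hb, Pi.star_apply]; split_ifs <;> simp
  refine ⟨fromBlocks (diagonal a) (diagonal b) (diagonal b) (diagonal a), ?_, ?_⟩
  · rw [Matrix.mem_unitaryGroup_iff, star_eq_conjTranspose, fromBlocks_conjTranspose]
    simp only [diagonal_conjTranspose, hsa, hsb, fromBlocks_multiply, diagonal_mul_diagonal,
      diagonal_add]
    rw [← fromBlocks_one]
    congr 1
    · rw [← diagonal_one]; congr 1; ext y; simp only [ha, hb]; split_ifs <;> simp
    · rw [← diagonal_zero]; congr 1; ext y; simp only [ha, hb]; split_ifs <;> simp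
    · rw [← diagonal_zero]; congr 1; ext y; simp only [ha, hb]; split_ifs <;> simp
    · rw [← diagonal_one]; congr 1; ext y; simp only [ha, hb]; split_ifs <;> simp
  · intro x e v out
    have hout : out = a x * a x - b x * b x := by
      simp only [out, v, fromBlocks_conjTranspose, diagonal_conjTranspose, hsa, hsb,
        fromBlocks_multiply, fromBlocks_mulVec]
      simp [dotProduct, Fintype.sum_sum_type, e, mulVec_diagonal, add_mulVec, neg_mulVec,
        apply_ite, sub_eq_add_neg]
    rw [hout]
    constructor <;> intro h <;> simp [ha, hb, h]
end

section
/- Let N ≥ 1 and let x⁽¹⁾, …, x⁽ᵐ⁾ ∈ ℂ^N be any finite sequence of vectors. Then the m×m real matrix G with entries G_{ab} = |∑_i x⁽ᵃ⁾_i conj(x⁽ᵇ⁾_i)|² has rank at most N². That is, the Gram matrix of the QNN kernel K(x, y) = |⟨x, y⟩|² on an N-dimensional Hilbert space has rank at most N². -/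
open Matrix

lemma aux_sum_s16 {N : ℕ} (f g : Fin N → Fin N → ℝ)
    (h : ∀ i j, f i j + f j i = g i j + g j i) :
    ∑ i, ∑ j, f i j = ∑ i, ∑ j, g i j := by
  have h1 : ∑ i, ∑ j, (f i j + f j i) = ∑ i, ∑ j, (g i j + g j i) := by
    simp only [h]
  simp only [Finset.sum_add_distrib] at h1
  rw [Finset.sum_comm (f := fun i j => f j i), Finset.sum_comm (f := fun i j => g j i)] at h1
  linarith

/-- For any vectors `x⁽¹⁾, …, x⁽ᵐ⁾ ∈ ℂ^N`, the `m×m` real Gram matrix of the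
QNN kernel `K(x,y) = |⟨x,y⟩|²`, with entries `G_{ab} = |∑_i x⁽ᵃ⁾_i conj(x⁽ᵇ⁾_i)|²`,
has rank at most `N²`. -/
theorem stmt16 (N m : ℕ) (hN : 1 ≤ N) (x : Fin m → Fin N → ℂ) :
    (Matrix.of fun a b : Fin m =>
        (Complex.normSq (∑ i, x a i * star (x b i)) : ℝ)).rank ≤ N ^ 2 := by
  let A : Matrix (Fin m) (Fin N × Fin N) ℝ := Matrix.of fun a p =>
    (x a p.1 * star (x a p.2)).re + (x a p.1 * star (x a p.2)).im
  have key : (Matrix.of fun a b : Fin m =>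
      (Complex.normSq (∑ i, x a i * star (x b i)) : ℝ)) = A * Aᵀ := by
    ext a b
    simp only [Matrix.mul_apply, Matrix.of_apply, Matrix.transpose_apply, A,
      Fintype.sum_prod_type, Complex.normSq_apply, Complex.re_sum, Complex.im_sum,
      Finset.sum_mul_sum, ← Finset.sum_add_distrib]
    apply aux_sum_s16
    intro i j
    simp only [Complex.mul_re, Complex.mul_im, Complex.star_def, Complex.conj_re, Complex.conj_im]
    ring
  rw [key]
  refine (Matrix.rank_mul_le_left A Aᵀ).trans ((Matrix.rank_le_card_width A).trans ?_)
  simp [sq]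
end
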